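/- Let G be a planar graph with maximum degree Δ. Then G admits a proper edge colouring with at most Δ + 4 colours, and moreover each edge uv can receive a colour in {1, ..., max(deg(u), deg(v)) + 4}. -/

import Mathlib

open scoped Classical

/-- `G` has a straight-line plane drawing: vertices are mapped injectively to points of the
plane, edges are the straight segments between their endpoints, two distinct edges only meet in
shared endpoints, and no vertex lies on a non-incident edge. By Fáry's theorem this
characterises planar (simple) graphs. -/
def StraightLinePlanar {V : Type*} (G : SimpleGraph V) : Prop :=
  ∃ f : V → ℝ × ℝ, Function.Injective f ∧
    (∀ u v x y : V, G.Adj u v → G.Adj x y → s(u, v) ≠ s(x, y) →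
      segment ℝ (f u) (f v) ∩ segment ℝ (f x) (f y) ⊆
        ({f u, f v} : Set (ℝ × ℝ)) ∩ ({f x, f y} : Set (ℝ × ℝ))) ∧
    (∀ w u v : V, G.Adj u v → w ≠ u → w ≠ v → f w ∉ segment ℝ (f u) (f v))

/-- The height at abscissa `t` of the line through `p` and `q`. -/
noncomputable def lineHeight (p q : ℝ × ℝ) (t : ℝ) : ℝ :=
  p.2 + (q.2 - p.2) / (q.1 - p.1) * (t - p.1)

lemma lineHeight_left (p q : ℝ × ℝ) : lineHeight p q p.1 = p.2 := by
  simp [lineHeight]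

lemma lineHeight_right {p q : ℝ × ℝ} (h : p.1 < q.1) : lineHeight p q q.1 = q.2 := by
  have : q.1 - p.1 ≠ 0 := by linarith
  simp only [lineHeight]
  field_simp
  ring

lemma continuous_lineHeight (p q : ℝ × ℝ) : Continuous (lineHeight p q) := by
  unfold lineHeight
  fun_prop

lemma lineHeight_lt_iff_slope_lt {p q r : ℝ × ℝ} {t : ℝ} (ht : p.1 < t) :
    lineHeight p q t < lineHeight p r t ↔
      (q.2 - p.2) / (q.1 - p.1) < (r.2 - p.2) / (r.1 - p.1) := by
  simp only [lineHeight, add_lt_add_iff_left]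
  exact mul_lt_mul_iff_left₀ (by linarith)

lemma lineHeight_eq_of_slope_eq {p q r : ℝ × ℝ}
    (h : (q.2 - p.2) / (q.1 - p.1) = (r.2 - p.2) / (r.1 - p.1)) :
    lineHeight p q = lineHeight p r := by
  funext t
  simp only [lineHeight, h]

lemma mk_lineHeight_mem_segment {p q : ℝ × ℝ} {t : ℝ} (h : p.1 < q.1)
    (ht : t ∈ Set.Icc p.1 q.1) : (t, lineHeight p q t) ∈ segment ℝ p q := by
  have hne : q.1 - p.1 ≠ 0 := by linarith
  refine ⟨(q.1 - t) / (q.1 - p.1), (t - p.1) / (q.1 - p.1),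
    div_nonneg (by linarith [ht.2]) (by linarith), div_nonneg (by linarith [ht.1]) (by linarith),
    by field_simp; ring, ?_⟩
  ext
  · simp only [Prod.fst_add, Prod.smul_fst, smul_eq_mul]
    field_simp
    ring
  · simp only [Prod.snd_add, Prod.smul_snd, smul_eq_mul, lineHeight]
    field_simp
    ring

/-- A straight-line plane drawing in which distinct vertices have distinct abscissae. -/
structure IsGenericDrawing {V : Type*} (G : SimpleGraph V) (f : V → ℝ × ℝ) : Prop where
  fst_injective : Function.Injective fun v => (f v).1
  segment_inter_subset : ∀ u v x y : V, G.Adj u v → G.Adj x y → s(u, v) ≠ s(x, y) →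
    segment ℝ (f u) (f v) ∩ segment ℝ (f x) (f y) ⊆
      ({f u, f v} : Set (ℝ × ℝ)) ∩ ({f x, f y} : Set (ℝ × ℝ))
  notMem_segment : ∀ w u v : V, G.Adj u v → w ≠ u → w ≠ v → f w ∉ segment ℝ (f u) (f v)

lemma exists_injective_add_mul {V : Type*} [Finite V] {f : V → ℝ × ℝ}
    (hf : Function.Injective f) : ∃ t : ℝ, Function.Injective fun v => (f v).1 + t * (f v).2 := by
  obtain ⟨t, ht⟩ := (Set.finite_range fun p : V × V =>
    ((f p.1).1 - (f p.2).1) / ((f p.2).2 - (f p.1).2)).exists_notMem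
  refine ⟨t, fun u v huv => ?_⟩
  by_contra hne
  have huv : (f u).1 + t * (f u).2 = (f v).1 + t * (f v).2 := huv
  by_cases h2 : (f u).2 = (f v).2
  · refine hne (hf (Prod.ext ?_ h2))
    rw [h2] at huv
    linarith
  · refine ht ⟨(u, v), ?_⟩
    have : (f v).2 - (f u).2 ≠ 0 := fun h => h2 (by linarith)
    simp only
    rw [div_eq_iff this]
    linarith

lemma StraightLinePlanar.exists_isGenericDrawing {V : Type*} [Finite V] {G : SimpleGraph V}
    (hG : StraightLinePlanar G) : ∃ f, IsGenericDrawing G f := by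
  obtain ⟨f, hf, hseg, hvert⟩ := hG
  obtain ⟨t, ht⟩ := exists_injective_add_mul hf
  let L : ℝ × ℝ →ₗ[ℝ] ℝ × ℝ :=
    (LinearMap.fst ℝ ℝ ℝ + t • LinearMap.snd ℝ ℝ ℝ).prod (LinearMap.snd ℝ ℝ ℝ)
  have hL : Function.Injective L := by
    rintro ⟨a, b⟩ ⟨c, d⟩ h
    have h2 : b = d := congrArg Prod.snd h
    have h1 : a + t * b = c + t * d := congrArg Prod.fst h
    simpa [h2] using h1
  have himage (a b : ℝ × ℝ) : segment ℝ (L a) (L b) = L '' segment ℝ a b :=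
    (image_segment ℝ L.toAffineMap a b).symm
  refine ⟨fun v => L (f v), fun u v huv => ht (by simpa [L] using huv), ?_, ?_⟩
  · intro u v x y huv hxy hne
    simp only [himage]
    rw [← Set.image_inter hL, ← Set.image_pair L, ← Set.image_pair L, ← Set.image_inter hL]
    exact Set.image_mono (hseg u v x y huv hxy hne)
  · intro w u v huv hwu hwv
    simp only [himage]
    rw [hL.mem_set_image]
    exact hvert w u v huv hwu hwv

namespace IsGenericDrawing

variable {V : Type*} {G : SimpleGraph V} {f : V → ℝ × ℝ}

/-- A common abscissa at which two distinct edges have the same height is an endpoint of both. -/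
lemma eq_endpoint (hf : IsGenericDrawing G f) {u c v d : V} {t : ℝ}
    (huc : G.Adj u c) (hvd : G.Adj v d) (hu : (f u).1 < (f c).1) (hv : (f v).1 < (f d).1)
    (hne : (u, c) ≠ (v, d)) (htu : t ∈ Set.Icc (f u).1 (f c).1)
    (htv : t ∈ Set.Icc (f v).1 (f d).1)
    (h : lineHeight (f u) (f c) t = lineHeight (f v) (f d) t) :
    (t = (f u).1 ∨ t = (f c).1) ∧ (t = (f v).1 ∨ t = (f d).1) := by
  have hne' : s(u, c) ≠ s(v, d) := by
    rw [Ne, Sym2.eq_iff]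
    rintro (⟨rfl, rfl⟩ | ⟨rfl, rfl⟩)
    · exact hne rfl
    · exact lt_asymm hu hv
  have hmem := hf.segment_inter_subset u c v d huc hvd hne'
    ⟨mk_lineHeight_mem_segment hu htu, h ▸ mk_lineHeight_mem_segment hv htv⟩
  simp only [Set.mem_inter_iff, Set.mem_insert_iff, Set.mem_singleton_iff] at hmem
  exact ⟨hmem.1.imp (congrArg Prod.fst) (congrArg Prod.fst),
    hmem.2.imp (congrArg Prod.fst) (congrArg Prod.fst)⟩

/-- A vertex lying on an edge is one of its endpoints. -/
lemma eq_or_eq_of_height_eq (hf : IsGenericDrawing G f) {u c w : V}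
    (huc : G.Adj u c) (hu : (f u).1 < (f c).1) (hw : (f w).1 ∈ Set.Icc (f u).1 (f c).1)
    (h : lineHeight (f u) (f c) (f w).1 = (f w).2) : w = u ∨ w = c := by
  by_contra! hne
  have hmem := mk_lineHeight_mem_segment hu hw
  rw [h] at hmem
  exact hf.notMem_segment w u c huc hne.1 hne.2 hmem

/-- Two edges keep their vertical order over the whole of their common range. -/
lemma height_le_of_height_lt (hf : IsGenericDrawing G f) {u c v d : V} {r s : ℝ}
    (huc : G.Adj u c) (hvd : G.Adj v d) (hu : (f u).1 < (f c).1) (hv : (f v).1 < (f d).1)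
    (hru : r ∈ Set.Icc (f u).1 (f c).1) (hrv : r ∈ Set.Icc (f v).1 (f d).1)
    (hsu : s ∈ Set.Icc (f u).1 (f c).1) (hsv : s ∈ Set.Icc (f v).1 (f d).1)
    (h : lineHeight (f u) (f c) r < lineHeight (f v) (f d) r) :
    lineHeight (f u) (f c) s ≤ lineHeight (f v) (f d) s := by
  by_contra! hlt
  have hne : (u, c) ≠ (v, d) := by
    rintro ⟨⟩
    exact lt_irrefl _ h
  obtain ⟨z, hz, hz0⟩ := intermediate_value_uIcc
    (f := fun t => lineHeight (f u) (f c) t - lineHeight (f v) (f d) t) (a := r) (b := s)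
    ((continuous_lineHeight _ _).sub (continuous_lineHeight _ _)).continuousOn
    (Set.mem_uIcc.2 (Or.inl ⟨(sub_neg.2 h).le, (sub_pos.2 hlt).le⟩))
  have hz0 : lineHeight (f u) (f c) z = lineHeight (f v) (f d) z := sub_eq_zero.1 hz0
  have hzr : z ≠ r := by
    rintro rfl
    exact h.ne hz0
  have hzs : z ≠ s := by
    rintro rfl
    exact hlt.ne' hz0
  have hend := (hf.eq_endpoint huc hvd hu hv hne (Set.uIcc_subset_Icc hru hsu hz)
    (Set.uIcc_subset_Icc hrv hsv hz) hz0).1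
  rcases Set.mem_uIcc.1 hz with ⟨h1, h2⟩ | ⟨h1, h2⟩ <;>
  · have h1' := lt_of_le_of_ne h1 (by tauto)
    have h2' := lt_of_le_of_ne h2 (by tauto)
    rcases hend with hend | hend <;> linarith [hru.1, hru.2, hsu.1, hsu.2]

end IsGenericDrawing

/-- `a` and `b` are right neighbours of `v`, with `vb` immediately above `va`. -/
structure IsRightCorner {V : Type*} (G : SimpleGraph V) (f : V → ℝ × ℝ) (v a b : V) : Prop where
  adj_lower : G.Adj v a
  adj_upper : G.Adj v b
  lt_lower : (f v).1 < (f a).1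
  lt_upper : (f v).1 < (f b).1
  slope_lt : ((f a).2 - (f v).2) / ((f a).1 - (f v).1) < ((f b).2 - (f v).2) / ((f b).1 - (f v).1)
  slope_le : ∀ c, G.Adj v c → (f v).1 < (f c).1 →
    ((f c).2 - (f v).2) / ((f c).1 - (f v).1) < ((f b).2 - (f v).2) / ((f b).1 - (f v).1) →
    ((f c).2 - (f v).2) / ((f c).1 - (f v).1) ≤ ((f a).2 - (f v).2) / ((f a).1 - (f v).1)

/-- The vertex `w` lies in the wedge between the edges `va` and `vb`, no further right than either
edge reaches. -/
structure InWedge {V : Type*} (f : V → ℝ × ℝ) (v a b w : V) : Prop where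
  lt : (f v).1 < (f w).1
  le_lower : (f w).1 ≤ (f a).1
  le_upper : (f w).1 ≤ (f b).1
  lower_le : lineHeight (f v) (f a) (f w).1 ≤ (f w).2
  le_height : (f w).2 ≤ lineHeight (f v) (f b) (f w).1

/-- `w` is the leftmost non-isolated vertex in the wedge between `va` and `vb`. -/
structure IsFirstInWedge {V : Type*} (G : SimpleGraph V) (f : V → ℝ × ℝ) (v a b w : V) :
    Prop where
  inWedge : InWedge f v a b w
  mem_support : w ∈ G.support
  le_of_inWedge : ∀ z ∈ G.support, InWedge f v a b z → (f w).1 ≤ (f z).1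

lemma IsRightCorner.exists_isFirstInWedge {V : Type*} [Finite V] {G : SimpleGraph V}
    {f : V → ℝ × ℝ} {v a b : V} (h : IsRightCorner G f v a b) :
    ∃ w, IsFirstInWedge G f v a b w := by
  have hne : {w | w ∈ G.support ∧ InWedge f v a b w}.Nonempty := by
    rcases le_total (f a).1 (f b).1 with hab | hab
    · refine ⟨a, ⟨v, h.adj_lower.symm⟩, h.lt_lower, le_rfl, hab, ?_, ?_⟩
      · exact (lineHeight_right h.lt_lower).le
      · rw [← lineHeight_right h.lt_lower]
        exact ((lineHeight_lt_iff_slope_lt h.lt_lower).2 h.slope_lt).le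
    · refine ⟨b, ⟨v, h.adj_upper.symm⟩, h.lt_upper, hab, le_rfl, ?_, ?_⟩
      · conv_rhs => rw [← lineHeight_right h.lt_upper]
        exact ((lineHeight_lt_iff_slope_lt h.lt_upper).2 h.slope_lt).le
      · exact (lineHeight_right h.lt_upper).ge
  obtain ⟨w, hw, hmin⟩ := Set.exists_min_image _ (fun w => (f w).1) (Set.toFinite _) hne
  exact ⟨w, hw.2, hw.1, fun z hz hzw => hmin z ⟨hz, hzw⟩⟩

/-- A corner is determined by the first vertex `w` of its wedge, once it is known whether `w` is
the end of the upper edge. -/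
lemma IsGenericDrawing.corner_unique {V : Type*} {G : SimpleGraph V} {f : V → ℝ × ℝ}
    (hf : IsGenericDrawing G f) {v a b v' a' b' w : V}
    (hc : IsRightCorner G f v a b) (hc' : IsRightCorner G f v' a' b')
    (hw : IsFirstInWedge G f v a b w) (hw' : IsFirstInWedge G f v' a' b' w)
    (hside : w = b ↔ w = b') : (v, b) = (v', b') := by
  by_contra hne
  obtain ⟨r, hr, hrw⟩ := exists_between (max_lt hw.inWedge.lt hw'.inWedge.lt)
  rw [max_lt_iff] at hr
  have hrb := hrw.trans_le hw.inWedge.le_upper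
  have hrb' := hrw.trans_le hw'.inWedge.le_upper
  have hrne : lineHeight (f v) (f b) r ≠ lineHeight (f v') (f b') r := fun h => by
    rcases (hf.eq_endpoint hc.adj_upper hc'.adj_upper hc.lt_upper hc'.lt_upper hne
      ⟨hr.1.le, hrb.le⟩ ⟨hr.2.le, hrb'.le⟩ h).1 with h | h <;> linarith [hr.1]
  wlog hlt : lineHeight (f v') (f b') r < lineHeight (f v) (f b) r generalizing v a b v' a' b'
  · exact this hc' hc hw' hw hside.symm (Ne.symm hne) hr.symm hrb' hrb hrne.symm
      (lt_of_le_of_ne (not_lt.1 hlt) hrne)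
  obtain ⟨hvw, hwa, hwb, hlow, hup⟩ := hw.inWedge
  obtain ⟨hvw', hwa', hwb', hlow', hup'⟩ := hw'.inWedge
  have hwlt : lineHeight (f v) (f a) (f w).1 < lineHeight (f v') (f b') (f w).1 := by
    refine lt_of_le_of_ne (hlow.trans hup') fun heq => ?_
    have hab : w = v ∨ w = a :=
      hf.eq_or_eq_of_height_eq hc.adj_lower hc.lt_lower ⟨hvw.le, hwa⟩ (by linarith)
    have hab' : w = v' ∨ w = b' :=
      hf.eq_or_eq_of_height_eq hc'.adj_upper hc'.lt_upper ⟨hvw'.le, hwb'⟩ (by linarith)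
    have hwa : w = a := hab.resolve_left fun h => hvw.ne (by rw [h])
    have hwb : w = b := hside.2 (hab'.resolve_left fun h => hvw'.ne (by rw [h]))
    have := hc.slope_lt
    rw [← hwa, ← hwb] at this
    exact lt_irrefl _ this
  have hbetween {s : ℝ} (hs : (f v).1 ≤ s) (hs' : (f v').1 ≤ s) (hsw : s ≤ (f w).1) :
      lineHeight (f v) (f a) s ≤ lineHeight (f v') (f b') s ∧
        lineHeight (f v') (f b') s ≤ lineHeight (f v) (f b) s :=
    ⟨hf.height_le_of_height_lt hc.adj_lower hc'.adj_upper hc.lt_lower hc'.lt_upper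
      ⟨hvw.le, hwa⟩ ⟨hvw'.le, hwb'⟩ ⟨hs, hsw.trans hwa⟩ ⟨hs', hsw.trans hwb'⟩ hwlt,
     hf.height_le_of_height_lt hc'.adj_upper hc.adj_upper hc'.lt_upper hc.lt_upper
      ⟨hr.2.le, hrb'.le⟩ ⟨hr.1.le, hrb.le⟩ ⟨hs', hsw.trans hwb'⟩ ⟨hs, hsw.trans hwb⟩ hlt⟩
  rcases lt_trichotomy (f v).1 (f v').1 with hvv | hvv | hvv
  · obtain ⟨h1, h2⟩ := hbetween hvv.le le_rfl hvw'.le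
    rw [lineHeight_left] at h1 h2
    exact hvw'.not_ge (hw.le_of_inWedge v' ⟨b', hc'.adj_upper⟩
      ⟨hvv, hvw'.le.trans hwa, hvw'.le.trans hwb, h1, h2⟩)
  · obtain rfl : v = v' := hf.fst_injective hvv
    exact ((lineHeight_lt_iff_slope_lt hvw).1 hwlt).not_ge (hc.slope_le b' hc'.adj_upper
      hc'.lt_upper ((lineHeight_lt_iff_slope_lt hr.1).1 hlt))
  · obtain ⟨h1, h2⟩ := hbetween le_rfl hvv.le hvw.le
    rw [lineHeight_left] at h1 h2
    rcases hf.eq_or_eq_of_height_eq hc'.adj_upper hc'.lt_upper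
      ⟨hvv.le, hvw.le.trans hwb'⟩ (le_antisymm h2 h1) with rfl | rfl
    · exact lt_irrefl _ hvv
    · linarith

/-- Two right neighbours of a vertex at the same slope coincide. -/
lemma IsGenericDrawing.eq_of_slope_eq {V : Type*} {G : SimpleGraph V} {f : V → ℝ × ℝ}
    (hf : IsGenericDrawing G f) {v b c : V} (hb : G.Adj v b) (hc : G.Adj v c)
    (hvb : (f v).1 < (f b).1) (hvc : (f v).1 < (f c).1)
    (h : ((f b).2 - (f v).2) / ((f b).1 - (f v).1) = ((f c).2 - (f v).2) / ((f c).1 - (f v).1)) :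
    b = c := by
  have heq := lineHeight_eq_of_slope_eq h
  by_contra hne
  obtain ⟨t, hvt, ht⟩ := exists_between (lt_min hvb hvc)
  rw [lt_min_iff] at ht
  rcases (hf.eq_endpoint hb hc hvb hvc (by simpa using hne) ⟨hvt.le, ht.1.le⟩ ⟨hvt.le, ht.2.le⟩
    (congrFun heq t)).1 with h | h <;> linarith

/-- Every edge is the lowest edge going right from its left end, or the upper side of a corner. -/
lemma lowest_or_exists_isRightCorner {V : Type*} [Finite V] {G : SimpleGraph V}
    {f : V → ℝ × ℝ} {v b : V} (hb : G.Adj v b) (hvb : (f v).1 < (f b).1) :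
    (∀ c, G.Adj v c → (f v).1 < (f c).1 →
      ((f b).2 - (f v).2) / ((f b).1 - (f v).1) ≤ ((f c).2 - (f v).2) / ((f c).1 - (f v).1)) ∨
    ∃ a, IsRightCorner G f v a b := by
  by_cases hlow : ∀ c, G.Adj v c → (f v).1 < (f c).1 →
      ((f b).2 - (f v).2) / ((f b).1 - (f v).1) ≤ ((f c).2 - (f v).2) / ((f c).1 - (f v).1)
  · exact Or.inl hlow
  · push Not at hlow
    obtain ⟨c, hc, hvc, hcb⟩ := hlow
    obtain ⟨a, ⟨ha, hva, hab⟩, hmax⟩ := Set.exists_max_image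
      {c | G.Adj v c ∧ (f v).1 < (f c).1 ∧
        ((f c).2 - (f v).2) / ((f c).1 - (f v).1) < ((f b).2 - (f v).2) / ((f b).1 - (f v).1)}
      (fun c => ((f c).2 - (f v).2) / ((f c).1 - (f v).1)) (Set.toFinite _) ⟨c, hc, hvc, hcb⟩
    exact Or.inr ⟨a, ha, hb, hva, hvb, hab, fun c h1 h2 h3 => hmax c ⟨h1, h2, h3⟩⟩

/-- Charging every edge to a vertex: the lowest edge going right from `v` to `(v, 0)`, and the upper
side of a corner to the first vertex of the corner's wedge. -/
lemma IsGenericDrawing.card_lt {V : Type*} [Fintype V] {G : SimpleGraph V} {f : V → ℝ × ℝ}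
    (hf : IsGenericDrawing G f) (hG : G.support.Nonempty) :
    (Finset.univ.filter fun e : V × V => G.Adj e.1 e.2 ∧ (f e.1).1 < (f e.2).1).card <
      G.support.toFinset.card * 3 := by
  have hcharge : ∀ e : V × V, ∃ p : V × Fin 3, G.Adj e.1 e.2 → (f e.1).1 < (f e.2).1 →
      p.1 ∈ G.support ∧
      ((p.2 = 0 ∧ p.1 = e.1 ∧ ∀ c, G.Adj e.1 c → (f e.1).1 < (f c).1 →
        ((f e.2).2 - (f e.1).2) / ((f e.2).1 - (f e.1).1) ≤
          ((f c).2 - (f e.1).2) / ((f c).1 - (f e.1).1)) ∨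
      (p.2 ≠ 0 ∧ (p.1 = e.2 ↔ p.2 = 1) ∧ ∃ a, IsRightCorner G f e.1 a e.2 ∧
        IsFirstInWedge G f e.1 a e.2 p.1)) := by
    rintro ⟨v, b⟩
    by_cases h : G.Adj v b ∧ (f v).1 < (f b).1
    · rcases lowest_or_exists_isRightCorner h.1 h.2 with hlow | ⟨a, ha⟩
      · exact ⟨(v, 0), fun _ _ => ⟨⟨b, h.1⟩, Or.inl ⟨rfl, rfl, hlow⟩⟩⟩
      · obtain ⟨w, hw⟩ := ha.exists_isFirstInWedge
        refine ⟨(w, if w = b then 1 else 2), fun _ _ =>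
          ⟨hw.mem_support, Or.inr ⟨?_, ?_, a, ha, hw⟩⟩⟩
        · dsimp only
          split_ifs <;> decide
        · dsimp only
          split_ifs with hwb
          · simp [hwb]
          · simp [hwb]
    · exact ⟨(v, 0), fun h1 h2 => absurd ⟨h1, h2⟩ h⟩
  choose φ hφ using hcharge
  obtain ⟨m, hm, hmax⟩ := Set.exists_max_image G.support (fun v => (f v).1) (Set.toFinite _) hG
  have hcard : (G.support.toFinset ×ˢ (Finset.univ : Finset (Fin 3))).card =
      G.support.toFinset.card * 3 := by
    simp [Finset.card_product]
  rw [← hcard]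
  refine lt_of_le_of_lt (b := ((G.support.toFinset ×ˢ (Finset.univ : Finset (Fin 3))).erase
    (m, 0)).card) ?_ (Finset.card_erase_lt_of_mem (by simpa using hm))
  refine Finset.card_le_card_of_injOn φ ?_ ?_
  · intro e he
    simp only [Finset.coe_filter, Finset.mem_univ, true_and, Set.mem_ofPred_eq] at he
    obtain ⟨hs, hcase⟩ := hφ e he.1 he.2
    simp only [Finset.mem_coe, Finset.mem_erase, Finset.mem_product, Set.mem_toFinset,
      Finset.mem_univ, and_true]
    refine ⟨fun hem => ?_, hs⟩
    rcases hcase with ⟨-, h, -⟩ | ⟨h, -⟩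
    · rw [hem] at h
      have := hmax e.2 ⟨e.1, he.1.symm⟩
      rw [← h] at he
      exact he.2.not_ge this
    · exact h (by rw [hem])
  · intro e he e' he' hee
    simp only [Finset.coe_filter, Finset.mem_univ, true_and, Set.mem_ofPred_eq] at he he'
    obtain ⟨-, hcase⟩ := hφ e he.1 he.2
    obtain ⟨-, hcase'⟩ := hφ e' he'.1 he'.2
    rw [← hee] at hcase'
    obtain ⟨v, b⟩ := e
    obtain ⟨v', b'⟩ := e'
    rcases hcase with ⟨h0, hv, hlow⟩ | ⟨h0, hb, a, ha, hw⟩ <;>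
      rcases hcase' with ⟨h0', hv', hlow'⟩ | ⟨h0', hb', a', ha', hw'⟩
    · obtain rfl : v = v' := hv.symm.trans hv'
      exact congrArg (Prod.mk v) (hf.eq_of_slope_eq he.1 he'.1 he.2 he'.2
        (le_antisymm (hlow b' he'.1 he'.2) (hlow' b he.1 he.2)))
    · exact absurd h0 h0'
    · exact absurd h0' h0
    · exact hf.corner_unique ha ha' hw hw' (hb.trans hb'.symm)

/-- A planar graph with an edge has a non-isolated vertex of degree at most five. -/
lemma StraightLinePlanar.exists_degree_le_five {V : Type*} [Fintype V] {G : SimpleGraph V}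
    (hG : StraightLinePlanar G) (hne : G.support.Nonempty) :
    ∃ v ∈ G.support, G.degree v ≤ 5 := by
  obtain ⟨f, hf⟩ := hG.exists_isGenericDrawing
  by_contra! hdeg
  have hlt := hf.card_lt hne
  have hsplit (v : V) : G.degree v =
      (Finset.univ.filter fun b => G.Adj v b ∧ (f v).1 < (f b).1).card +
        (Finset.univ.filter fun b => G.Adj b v ∧ (f b).1 < (f v).1).card := by
    rw [← Finset.card_union_of_disjoint, ← G.card_neighborFinset_eq_degree]
    · congr 1
      ext b
      simp only [SimpleGraph.mem_neighborFinset, Finset.mem_union, Finset.mem_filter,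
        Finset.mem_univ, true_and, G.adj_comm b v, ← and_or_left]
      exact ⟨fun h => ⟨h, lt_or_gt_of_ne fun he => h.ne (hf.fst_injective he)⟩, fun h => h.1⟩
    · rw [Finset.disjoint_filter]
      exact fun b _ h h' => lt_asymm h.2 h'.2
  have hfst : (Finset.univ.filter fun e : V × V => G.Adj e.1 e.2 ∧ (f e.1).1 < (f e.2).1).card =
      ∑ v, (Finset.univ.filter fun b => G.Adj v b ∧ (f v).1 < (f b).1).card := by
    simp only [Finset.card_filter]
    exact Fintype.sum_prod_type _
  have hsnd : (Finset.univ.filter fun e : V × V => G.Adj e.1 e.2 ∧ (f e.1).1 < (f e.2).1).card =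
      ∑ v, (Finset.univ.filter fun b => G.Adj b v ∧ (f b).1 < (f v).1).card := by
    simp only [Finset.card_filter]
    exact Fintype.sum_prod_type_right _
  have hsum : ∑ v, G.degree v = 2 *
      (Finset.univ.filter fun e : V × V => G.Adj e.1 e.2 ∧ (f e.1).1 < (f e.2).1).card := by
    simp only [hsplit, Finset.sum_add_distrib, ← hfst, ← hsnd]
    ring
  have hle : G.support.toFinset.card * 6 ≤ ∑ v, G.degree v := by
    rw [← smul_eq_mul]
    refine (Finset.card_nsmul_le_sum _ _ 6 fun v hv => hdeg v (by simpa using hv)).trans ?_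
    exact Finset.sum_le_sum_of_subset (Finset.subset_univ _)
  omega

lemma StraightLinePlanar.mono {V : Type*} {G H : SimpleGraph V} (h : H ≤ G)
    (hG : StraightLinePlanar G) : StraightLinePlanar H := by
  obtain ⟨f, hf, hseg, hvert⟩ := hG
  exact ⟨f, hf, fun u v x y huv hxy => hseg u v x y (h huv) (h hxy),
    fun w u v huv => hvert w u v (h huv)⟩

/-- A colouring of all edges but `uv` extends to `uv` if `uv` can be given a colour at most `k`
while it has fewer than `k` neighbouring edges. -/
lemma exists_color_extension {V : Type*} [Fintype V] {H : SimpleGraph V} {u v : V} {k : ℕ}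
    (huv : H.Adj u v) (f : Sym2 V → ℕ) (hk : H.degree u + H.degree v ≤ k + 1)
    (hf : ∀ x y z, (H.deleteEdges {s(u, v)}).Adj x y → (H.deleteEdges {s(u, v)}).Adj x z →
      y ≠ z → f s(x, y) ≠ f s(x, z)) :
    ∃ c, 1 ≤ c ∧ c ≤ k ∧ ∀ x y z, H.Adj x y → H.Adj x z → y ≠ z →
      Function.update f s(u, v) c s(x, y) ≠ Function.update f s(u, v) c s(x, z) := by
  let B : Finset ℕ := ((H.neighborFinset u).erase v).image (fun w => f s(u, w)) ∪
    ((H.neighborFinset v).erase u).image (fun w => f s(v, w))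
  have hB : B.card < (Finset.Icc 1 k).card := by
    have h1 : ((H.neighborFinset u).erase v).card = H.degree u - 1 := by
      rw [Finset.card_erase_of_mem (by simpa using huv), H.card_neighborFinset_eq_degree]
    have h2 : ((H.neighborFinset v).erase u).card = H.degree v - 1 := by
      rw [Finset.card_erase_of_mem (by simpa using huv.symm), H.card_neighborFinset_eq_degree]
    have hu : 0 < H.degree u := (H.degree_pos_iff_exists_adj u).2 ⟨v, huv⟩
    have hv : 0 < H.degree v := (H.degree_pos_iff_exists_adj v).2 ⟨u, huv.symm⟩
    have hunion : B.card ≤ _ := Finset.card_union_le _ _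
    have hi1 := Finset.card_image_le (s := (H.neighborFinset u).erase v)
      (f := fun w => f s(u, w))
    have hi2 := Finset.card_image_le (s := (H.neighborFinset v).erase u)
      (f := fun w => f s(v, w))
    rw [Nat.card_Icc]
    omega
  obtain ⟨c, hc, hcB⟩ := Finset.exists_mem_notMem_of_card_lt_card hB
  rw [Finset.mem_Icc] at hc
  have hnew {x y z : V} (hxz : H.Adj x z) (hyz : y ≠ z) (hxy : s(x, y) = s(u, v)) :
      c ≠ f s(x, z) := by
    rintro rfl
    apply hcB
    rw [Sym2.eq_iff] at hxy
    rcases hxy with ⟨rfl, rfl⟩ | ⟨rfl, rfl⟩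
    · exact Finset.mem_union_left _ (Finset.mem_image.2
        ⟨z, by simpa using ⟨hyz.symm, hxz⟩, rfl⟩)
    · exact Finset.mem_union_right _ (Finset.mem_image.2
        ⟨z, by simpa using ⟨hyz.symm, hxz⟩, rfl⟩)
  refine ⟨c, hc.1, hc.2, fun x y z hxy hxz hyz => ?_⟩
  have hne : s(x, y) ≠ s(x, z) := fun h => hyz (Sym2.congr_right.1 h)
  by_cases hy : s(x, y) = s(u, v)
  · rw [hy, Function.update_self, Function.update_of_ne (hy ▸ hne.symm)]
    exact hnew hxz hyz hy
  · by_cases hz : s(x, z) = s(u, v)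
    · rw [hz, Function.update_self, Function.update_of_ne hy]
      exact (hnew hxy hyz.symm hz).symm
    · rw [Function.update_of_ne hy, Function.update_of_ne hz]
      exact hf x y z (SimpleGraph.deleteEdges_adj.2 ⟨hxy, hy⟩)
        (SimpleGraph.deleteEdges_adj.2 ⟨hxz, hz⟩) hyz

/-- Every subgraph of a planar graph `G` has a proper edge colouring in which each edge is
bounded by four more than the `G`-degree of one of its ends. -/
lemma StraightLinePlanar.exists_coloring_of_le {V : Type*} [Fintype V] {G : SimpleGraph V}
    (hG : StraightLinePlanar G) (H : SimpleGraph V) (hH : H ≤ G) :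
    ∃ f : Sym2 V → ℕ,
      (∀ u v w : V, H.Adj u v → H.Adj u w → v ≠ w → f s(u, v) ≠ f s(u, w)) ∧
      (∀ u v : V, H.Adj u v →
        1 ≤ f s(u, v) ∧ f s(u, v) ≤ max (G.degree u) (G.degree v) + 4) := by
  induction H using WellFoundedLT.induction with
  | ind H ih =>
    by_cases hne : H.support.Nonempty
    · obtain ⟨u, ⟨v, huv⟩, hu⟩ := (hG.mono hH).exists_degree_le_five hne
      have hlt : H.deleteEdges {s(u, v)} < H :=
        (H.deleteEdges_le _).lt_of_not_ge fun h => by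
          simpa [SimpleGraph.deleteEdges_adj] using h huv
      obtain ⟨f, hf, hbound⟩ := ih _ hlt (hlt.le.trans hH)
      have hv : H.degree v ≤ G.degree v := SimpleGraph.degree_le_of_le hH
      obtain ⟨c, hc1, hck, hc⟩ := exists_color_extension (k := G.degree v + 4) huv f
        (by omega) hf
      refine ⟨Function.update f s(u, v) c, hc, fun x y hxy => ?_⟩
      by_cases he : s(x, y) = s(u, v)
      · rw [he, Function.update_self]
        refine ⟨hc1, ?_⟩
        rw [Sym2.eq_iff] at he
        rcases he with ⟨rfl, rfl⟩ | ⟨rfl, rfl⟩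
        · exact hck.trans (by gcongr; exact le_max_right _ _)
        · exact hck.trans (by gcongr; exact le_max_left _ _)
      · rw [Function.update_of_ne he]
        exact hbound x y (SimpleGraph.deleteEdges_adj.2 ⟨hxy, he⟩)
    · have hempty (u v : V) : ¬ H.Adj u v := fun h => hne ⟨u, v, h⟩
      exact ⟨0, fun u v _ h => absurd h (hempty u v), fun u v h => absurd h (hempty u v)⟩

/-- A planar graph with maximum degree `Δ` has a proper edge colouring with at
most `Δ + 4` colours, where moreover each edge `uv` gets a colour in
`{1, ..., max(deg u, deg v) + 4}`. -/
theorem stmt15 {V : Type*} [Fintype V] (G : SimpleGraph V)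
    (hplanar : StraightLinePlanar G) :
    ∃ f : Sym2 V → ℕ,
      (∀ u v w : V, G.Adj u v → G.Adj u w → v ≠ w → f s(u, v) ≠ f s(u, w)) ∧
      (∀ u v : V, G.Adj u v →
        1 ≤ f s(u, v) ∧ f s(u, v) ≤ max (G.degree u) (G.degree v) + 4 ∧
          f s(u, v) ≤ G.maxDegree + 4) := by
  obtain ⟨f, hf, hbound⟩ := hplanar.exists_coloring_of_le G le_rfl
  refine ⟨f, hf, fun u v huv => ⟨(hbound u v huv).1, (hbound u v huv).2, ?_⟩⟩
  refine (hbound u v huv).2.trans ?_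
  gcongr
  exact max_le (G.degree_le_maxDegree u) (G.degree_le_maxDegree v)
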